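/- Let n ≥ 1, m ≥ 1 be integers, k = m + n ≥ 3, s > 0, and L > 0. Then 2^{2/k} · Y_per(L) ≤ Y²_per(L). (This is Lemma 3 of the paper — 2^{2/(m+n)} Y_N(M×N, g+h) ≤ Y²_N(M×N, g+h) for closed M, N with s_g constant and Y_N ≥ 0 — in the case where N is the flat torus ℝⁿ/(Lℤ)ⁿ and (M^m, g) has constant scalar curvature s > 0 and unit volume.) -/

import Mathlib

/-!
The lower bound for the second periodic Yamabe constant, without eigenfunctions.

Let `(u, V)` be an admissible pair, `E` the energy, `W` the weighted `L²` form, and let `ν` exceed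
the largest value of `E / W` on `V`, so that `Q = E - ν W` is negative definite on `V`. For a smooth
approximation `φ` of the positive part, with `0 ≤ φ' ≤ 1` and `φ = 0` on `(-∞, 0]`, the functions
`φ(v)` and `φ(-v)` are smooth, periodic and have disjoint supports. Moreover
`E(φ(v)) + E(φ(-v)) ≤ E(v)` (`perEnergy_split`), while `W(φ(v)) + W(φ(-v))` is uniformly close to
`W(v)` on the unit circle of `V` (`perWeight_split`), so `Q(φ(v)) + Q(φ(-v)) < 0` there.
The function `v ↦ Q(φ(v)) - Q(φ(-v))` is continuous and odd on that circle, hence vanishes at some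
`v`; for this `v` both `Q(φ(v))` and `Q(φ(-v))` are negative
(`two_rpow_mul_yPer_le_of_pencil`). In particular neither function is zero.

For `w = φ(± v)`, the definition of `Y_per` and Hölder's inequality on the support of `w` give
`Y_per ≤ ν (∫_{w ≠ 0} u^p)^{2/k}` (`yPer_le_of_energy_le`). The supports are disjoint, so one of
them carries at most half of `∫ u^p`, whence `2^{2/k} Y_per ≤ ν (∫ u^p)^{2/k}`
(`two_rpow_mul_yPer_le`); let `ν` decrease to the maximum of `E / W`.

Since suprema and infima of reals have junk values, the quotients on `V` are shown to be bounded
(`exists_rayleigh_bound`) and the set of admissible pairs to be nonempty (`y2PerSet_nonempty`).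
-/

open MeasureTheory

noncomputable section

/-- The constant `a_k = 4(k-1)/(k-2)`. -/
def aK (k : ℕ) : ℝ := 4 * ((k : ℝ) - 1) / ((k : ℝ) - 2)

/-- The critical exponent `p_k = 2k/(k-2)`. -/
def pK (k : ℕ) : ℝ := 2 * (k : ℝ) / ((k : ℝ) - 2)

/-- Numerator of the Yamabe-type functional: `∫ (a_k |∇u|² + s u²) dx` on `ℝⁿ`. -/
def yNum (n k : ℕ) (s : ℝ) (u : EuclideanSpace ℝ (Fin n) → ℝ) : ℝ :=
  ∫ x, (aK k * ‖gradient u x‖ ^ 2 + s * (u x) ^ 2)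

/-- Values of the Yamabe-type functional over nonzero test functions. -/
def yamabeSet (n k : ℕ) (s : ℝ) : Set ℝ :=
  {r | ∃ u : EuclideanSpace ℝ (Fin n) → ℝ,
    ContDiff ℝ (⊤ : ℕ∞) u ∧ HasCompactSupport u ∧ u ≠ 0 ∧
    r = yNum n k s u / (∫ x, |u x| ^ pK k) ^ (2 / pK k)}

/-- The Euclidean Yamabe-type constant `Y_{n,k}(s)`. -/
def yamabeConst (n k : ℕ) (s : ℝ) : ℝ := sInf (yamabeSet n k s)

/-- Values of the min-max functional defining the `l`-th Euclidean Yamabe-type constant: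
for admissible pairs `(u, V)` with `u ≥ 0` measurable, compactly supported, with
`0 < ∫ u^{p_k} < ∞`, and `V` an `l`-dimensional space of smooth compactly supported
functions on which the weighted `L²` pairing is positive definite, take the sup over
`v ∈ V \ {0}` of the generalized Rayleigh quotient times `(∫ u^{p_k})^{2/k}`. -/
def yamabeLSet (n k : ℕ) (s : ℝ) (l : ℕ) : Set ℝ :=
  {r | ∃ (u : EuclideanSpace ℝ (Fin n) → ℝ)
        (V : Submodule ℝ (EuclideanSpace ℝ (Fin n) → ℝ)),
    Measurable u ∧ (∀ x, 0 ≤ u x) ∧ HasCompactSupport u ∧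
    Integrable (fun x => u x ^ pK k) ∧ (0 < ∫ x, u x ^ pK k) ∧
    Module.finrank ℝ V = l ∧
    (∀ v ∈ V, ContDiff ℝ (⊤ : ℕ∞) v ∧ HasCompactSupport v) ∧
    (∀ v ∈ V, v ≠ 0 → 0 < ∫ x, u x ^ (pK k - 2) * (v x) ^ 2) ∧
    r = sSup {t | ∃ v ∈ V, v ≠ 0 ∧
      t = (yNum n k s v / ∫ x, u x ^ (pK k - 2) * (v x) ^ 2) *
          (∫ x, u x ^ pK k) ^ (2 / (k : ℝ))}}

/-- The `l`-th Euclidean Yamabe-type constant `Y^l_{n,k}(s)`. -/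
def yamabeLConst (n k : ℕ) (s : ℝ) (l : ℕ) : ℝ := sInf (yamabeLSet n k s l)

/-- `u : ℝⁿ → ℝ` is `L`-periodic: invariant under the translation by `L·eᵢ` for every
standard basis vector `eᵢ`. -/
def IsPeriodicFun (n : ℕ) (L : ℝ) (u : EuclideanSpace ℝ (Fin n) → ℝ) : Prop :=
  ∀ (x : EuclideanSpace ℝ (Fin n)) (i : Fin n),
    u (x + L • EuclideanSpace.single i 1) = u x

/-- The fundamental domain `[0, L)ⁿ ⊆ ℝⁿ`. -/
def periodBox (n : ℕ) (L : ℝ) : Set (EuclideanSpace ℝ (Fin n)) :=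
  {x | ∀ i, x i ∈ Set.Ico (0 : ℝ) L}

/-- Values of the Yamabe-type functional over nonzero smooth `L`-periodic functions,
with integrals over the fundamental domain `[0,L)ⁿ`. -/
def yPerSet (n k : ℕ) (s L : ℝ) : Set ℝ :=
  {r | ∃ u : EuclideanSpace ℝ (Fin n) → ℝ,
    ContDiff ℝ (⊤ : ℕ∞) u ∧ IsPeriodicFun n L u ∧ u ≠ 0 ∧
    r = (∫ x in periodBox n L, (aK k * ‖gradient u x‖ ^ 2 + s * (u x) ^ 2)) /
        (∫ x in periodBox n L, |u x| ^ pK k) ^ (2 / pK k)}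

/-- The periodic Yamabe constant `Y_per(L)`. -/
def yPer (n k : ℕ) (s L : ℝ) : ℝ := sInf (yPerSet n k s L)

/-- Values of the min-max functional defining the second periodic Yamabe constant:
pairs `(u, V)` with `u` smooth, positive and `L`-periodic and `V` a `2`-dimensional
subspace of smooth `L`-periodic functions. -/
def y2PerSet (n k : ℕ) (s L : ℝ) : Set ℝ :=
  {r | ∃ (u : EuclideanSpace ℝ (Fin n) → ℝ)
        (V : Submodule ℝ (EuclideanSpace ℝ (Fin n) → ℝ)),
    ContDiff ℝ (⊤ : ℕ∞) u ∧ IsPeriodicFun n L u ∧ (∀ x, 0 < u x) ∧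
    Module.finrank ℝ V = 2 ∧
    (∀ v ∈ V, ContDiff ℝ (⊤ : ℕ∞) v ∧ IsPeriodicFun n L v) ∧
    r = sSup {t | ∃ v ∈ V, v ≠ 0 ∧
      t = ((∫ x in periodBox n L, (aK k * ‖gradient v x‖ ^ 2 + s * (v x) ^ 2)) /
           (∫ x in periodBox n L, u x ^ (pK k - 2) * (v x) ^ 2)) *
          (∫ x in periodBox n L, u x ^ pK k) ^ (2 / (k : ℝ))}}

/-- The second periodic Yamabe constant `Y²_per(L)`. -/
def y2Per (n k : ℕ) (s L : ℝ) : ℝ := sInf (y2PerSet n k s L)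

/-! ### A smooth approximation of the positive part -/

/-- A smooth approximation of the positive part `t ↦ max t 0`, given by `t * exp (-ε / t)` for
`t > 0` and by `0` for `t ≤ 0`. -/
def phi (ε t : ℝ) : ℝ := t * expNegInvGlue (t / ε)

lemma phi_contDiff (ε : ℝ) : ContDiff ℝ (⊤ : ℕ∞) (phi ε) :=
  contDiff_id.mul (expNegInvGlue.contDiff.comp (contDiff_id.div_const ε))

lemma phi_of_nonpos {ε t : ℝ} (hε : 0 < ε) (ht : t ≤ 0) : phi ε t = 0 := by
  unfold phi
  rw [expNegInvGlue.zero_of_nonpos (div_nonpos_of_nonpos_of_nonneg ht hε.le), mul_zero]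

lemma phi_of_pos {ε t : ℝ} (hε : 0 < ε) (ht : 0 < t) : phi ε t = t * Real.exp (-(ε / t)) := by
  unfold phi expNegInvGlue
  rw [if_neg (not_le.2 (div_pos ht hε)), inv_div]

lemma phi_nonneg {ε t : ℝ} (hε : 0 < ε) : 0 ≤ phi ε t := by
  rcases le_or_gt t 0 with h | h
  · exact (phi_of_nonpos hε h).ge
  · rw [phi_of_pos hε h]; positivity

lemma phi_le {ε t : ℝ} (hε : 0 < ε) (ht : 0 ≤ t) : phi ε t ≤ t := by
  rcases ht.eq_or_lt with rfl | h
  · simp [phi]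
  · rw [phi_of_pos hε h]
    have : Real.exp (-(ε / t)) ≤ 1 := Real.exp_le_one_iff.2 (by have := div_pos hε h; linarith)
    nlinarith

lemma sub_le_phi {ε t : ℝ} (hε : 0 < ε) : t - ε ≤ phi ε t := by
  rcases le_or_gt t 0 with h | h
  · rw [phi_of_nonpos hε h]; linarith
  · rw [phi_of_pos hε h]
    have h1 := Real.add_one_le_exp (-(ε / t))
    have h2 : t * (-(ε / t) + 1) = t - ε := by field_simp; ring
    nlinarith

lemma deriv_phi_of_nonpos {ε t : ℝ} (hε : 0 < ε) (ht : t ≤ 0) : deriv (phi ε) t = 0 := by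
  -- every `t ≤ 0` is a global minimum of `phi ε`
  apply IsLocalMin.deriv_eq_zero
  refine Filter.Eventually.of_forall fun y => ?_
  rw [phi_of_nonpos hε ht]
  exact phi_nonneg hε

lemma deriv_phi_sq_le {ε t : ℝ} (hε : 0 < ε) : deriv (phi ε) t ^ 2 ≤ 1 := by
  rcases le_or_gt t 0 with h | h
  · rw [deriv_phi_of_nonpos hε h]; norm_num
  · have h1 : HasDerivAt (fun y : ℝ => y * Real.exp (-(ε / y)))
        (Real.exp (-(ε / t)) * (1 + ε / t)) t := by
      have h2 : HasDerivAt (fun y : ℝ => -(ε / y)) (ε / t ^ 2) t := by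
        have := ((hasDerivAt_inv h.ne').const_mul ε).neg
        refine HasDerivAt.congr_deriv (f := fun y : ℝ => -(ε / y)) this ?_
        field_simp
      refine ((hasDerivAt_id' t).mul h2.exp).congr_deriv ?_
      field_simp
    have h3 : deriv (phi ε) t = Real.exp (-(ε / t)) * (1 + ε / t) := by
      refine (h1.congr_of_eventuallyEq ?_).deriv
      filter_upwards [lt_mem_nhds h] with y hy
      exact phi_of_pos hε hy
    rw [h3]
    have h4 := Real.add_one_le_exp (ε / t)
    have h5 : 0 < ε / t := div_pos hε h
    have h6 : Real.exp (-(ε / t)) * Real.exp (ε / t) = 1 := by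
      rw [← Real.exp_add]; simp
    have h7 := Real.exp_pos (-(ε / t))
    have h8 : Real.exp (-(ε / t)) * (1 + ε / t) ≤ 1 := by nlinarith
    have h9 : 0 ≤ Real.exp (-(ε / t)) * (1 + ε / t) := by positivity
    nlinarith

lemma deriv_phi_sq_add_le {ε : ℝ} (hε : 0 < ε) (t : ℝ) :
    deriv (phi ε) t ^ 2 + deriv (phi ε) (-t) ^ 2 ≤ 1 := by
  rcases le_total t 0 with h | h
  · rw [deriv_phi_of_nonpos hε h]
    have := deriv_phi_sq_le (t := -t) hε
    linarith
  · rw [deriv_phi_of_nonpos (t := -t) hε (by linarith)]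
    have := deriv_phi_sq_le (t := t) hε
    linarith

lemma phi_sq_add_le {ε : ℝ} (hε : 0 < ε) (t : ℝ) :
    phi ε t ^ 2 + phi ε (-t) ^ 2 ≤ t ^ 2 := by
  rcases le_total t 0 with h | h
  · rw [phi_of_nonpos hε h]
    nlinarith [phi_le (t := -t) hε (by linarith), phi_nonneg (t := -t) hε]
  · rw [phi_of_nonpos (t := -t) hε (by linarith)]
    nlinarith [phi_le (t := t) hε h, phi_nonneg (t := t) hε]

lemma le_phi_sq_add {ε : ℝ} (hε : 0 < ε) (t : ℝ) :
    t ^ 2 - 2 * ε * |t| ≤ phi ε t ^ 2 + phi ε (-t) ^ 2 := by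
  have key : ∀ r : ℝ, 0 ≤ r → r ^ 2 - 2 * ε * r ≤ phi ε r ^ 2 := by
    intro r hr
    have h1 := phi_le hε hr
    have h2 := sub_le_phi (t := r) hε
    have h3 := phi_nonneg (t := r) hε
    nlinarith [mul_le_mul_of_nonneg_right (show r - phi ε r ≤ ε by linarith)
      (show 0 ≤ r + phi ε r by linarith)]
  rcases le_total t 0 with h | h
  · have := key (-t) (by linarith)
    rw [abs_of_nonpos h, phi_of_nonpos hε h]
    nlinarith
  · have := key t h
    rw [abs_of_nonneg h, phi_of_nonpos (t := -t) hε (by linarith)]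
    nlinarith

/-! ### Integrals over the period box -/

section Box
variable {n : ℕ} {L : ℝ}

local notation "𝔼" n => EuclideanSpace ℝ (Fin n)

lemma measurableSet_periodBox : MeasurableSet (periodBox n L) := by
  have : periodBox n L = ⋂ i, (fun x : 𝔼 n => x i) ⁻¹' Set.Ico (0 : ℝ) L := by
    ext x; simp [periodBox]
  rw [this]
  refine MeasurableSet.iInter fun i => ?_
  exact (by fun_prop : Continuous fun x : 𝔼 n => x i).measurable measurableSet_Ico

lemma exists_isCompact_periodBox_subset :
    ∃ K : Set (𝔼 n), IsCompact K ∧ periodBox n L ⊆ K := by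
  refine ⟨(EuclideanSpace.equiv (Fin n) ℝ).toHomeomorph ⁻¹' Set.pi Set.univ
    (fun _ => Set.Icc (0 : ℝ) L), ?_, ?_⟩
  · rw [Homeomorph.isCompact_preimage]
    exact isCompact_univ_pi fun _ => isCompact_Icc
  · intro x hx i _
    exact ⟨(hx i).1, (hx i).2.le⟩

lemma volume_periodBox_lt_top : volume (periodBox n L) < ⊤ := by
  obtain ⟨K, hK, hsub⟩ := exists_isCompact_periodBox_subset (n := n) (L := L)
  exact (measure_mono hsub).trans_lt hK.measure_lt_top

lemma integrableOn_periodBox {f : (𝔼 n) → ℝ} (hf : Continuous f) :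
    IntegrableOn f (periodBox n L) := by
  obtain ⟨K, hK, hsub⟩ := exists_isCompact_periodBox_subset (n := n) (L := L)
  exact (hf.continuousOn.integrableOn_compact hK).mono_set hsub

lemma exists_bound_periodBox {f : (𝔼 n) → ℝ} (hf : Continuous f) :
    ∃ C, ∀ x ∈ periodBox n L, ‖f x‖ ≤ C := by
  obtain ⟨K, hK, hsub⟩ := exists_isCompact_periodBox_subset (n := n) (L := L)
  obtain ⟨C, hC⟩ := hK.exists_bound_of_continuousOn hf.continuousOn
  exact ⟨C, fun x hx => hC x (hsub hx)⟩

lemma continuous_integral_periodBox {f : ℂ → (𝔼 n) → ℝ}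
    (hf : Continuous (Function.uncurry f)) :
    Continuous fun z => ∫ x in periodBox n L, f z x := by
  obtain ⟨K, hK, hsub⟩ := exists_isCompact_periodBox_subset (n := n) (L := L)
  have h := continuous_parametric_integral_of_continuous
    (μ := volume.restrict (periodBox n L)) hf hK
  have h2 : (volume.restrict (periodBox n L)).restrict K = volume.restrict (periodBox n L) := by
    rw [Measure.restrict_restrict hK.measurableSet, Set.inter_eq_right.2 hsub]
  simpa only [h2] using h

/-- Every value of a periodic function is attained on the fundamental domain. -/
lemma IsPeriodicFun.exists_mem_box {v : (𝔼 n) → ℝ} (hL : 0 < L) (hv : IsPeriodicFun n L v)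
    (x : 𝔼 n) : ∃ y ∈ periodBox n L, v y = v x := by
  let H : AddSubgroup (𝔼 n) :=
    { carrier := {c | ∀ x, v (x + c) = v x}
      zero_mem' := fun x => by rw [add_zero]
      add_mem' := fun {a b} ha hb x => by rw [← add_assoc, hb, ha]
      neg_mem' := fun {a} ha x => by rw [← ha (x + -a), neg_add_cancel_right] }
  have hmem : ∑ i, (-⌊x i / L⌋) • (L • EuclideanSpace.single i (1 : ℝ)) ∈ H :=
    H.sum_mem fun i _ => H.zsmul_mem (fun x => hv x i) _
  refine ⟨x + ∑ i, (-⌊x i / L⌋) • (L • EuclideanSpace.single i (1 : ℝ)), ?_, hmem x⟩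
  intro j
  have hj : (x + ∑ i, (-⌊x i / L⌋) • (L • EuclideanSpace.single i (1 : ℝ))) j
      = x j - ⌊x j / L⌋ * L := by
    rw [PiLp.add_apply, WithLp.ofLp_sum, Finset.sum_apply, Finset.sum_eq_single j]
    · simp [sub_eq_add_neg]
    · intro b _ hb
      simp [hb.symm]
    · simp
  rw [hj]
  have h1 := Int.floor_le (x j / L)
  have h2 := Int.lt_floor_add_one (x j / L)
  rw [le_div_iff₀ hL] at h1
  rw [div_lt_iff₀ hL] at h2
  constructor <;> linarith

lemma IsPeriodicFun.integral_pos {g : (𝔼 n) → ℝ} (hL : 0 < L) (hg : IsPeriodicFun n L g)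
    (hc : Continuous g) (h0 : ∀ x, 0 ≤ g x) (hne : g ≠ 0) :
    0 < ∫ x in periodBox n L, g x := by
  rw [setIntegral_pos_iff_support_of_nonneg_ae (Filter.Eventually.of_forall h0)
    (integrableOn_periodBox hc)]
  obtain ⟨x, hx⟩ := Function.ne_iff.1 hne
  obtain ⟨y, hy, hyx⟩ := hg.exists_mem_box hL x
  have hgy : g y ≠ 0 := by rw [hyx]; exact hx
  let O : Set (𝔼 n) := ⋂ i, (fun x : 𝔼 n => x i) ⁻¹' Set.Ioo (0 : ℝ) L
  have hO : IsOpen O := isOpen_iInter_of_finite fun i =>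
    isOpen_Ioo.preimage (by fun_prop : Continuous fun x : 𝔼 n => x i)
  have hOsub : O ⊆ periodBox n L := fun z hz i => Set.Ioo_subset_Ico_self (Set.mem_iInter.1 hz i)
  have hopen : IsOpen (Function.support g ∩ O) := hc.isOpen_support.inter hO
  refine lt_of_lt_of_le (hopen.measure_pos volume ?_)
    (measure_mono (Set.inter_subset_inter_right _ hOsub))
  -- push `y` slightly towards the centre of the box
  let γ : ℝ → 𝔼 n := fun t => y + t • (WithLp.toLp 2 (fun _ => L / 2) - y)
  have hγ : Continuous γ := by fun_prop
  have hev : ∀ᶠ t in nhds (0 : ℝ), γ t ∈ Function.support g := by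
    refine hγ.continuousAt.eventually (hc.isOpen_support.mem_nhds ?_)
    simpa [γ] using hgy
  have hev1 : ∀ᶠ t in nhdsWithin (0 : ℝ) (Set.Ioi 0), γ t ∈ Function.support g ∧ t < 1 ∧ 0 < t :=
    ((hev.filter_mono nhdsWithin_le_nhds).and
      (((gt_mem_nhds one_pos).filter_mono nhdsWithin_le_nhds).and self_mem_nhdsWithin))
  obtain ⟨t, ht, ht1, ht0⟩ := hev1.exists
  refine ⟨γ t, ht, Set.mem_iInter.2 fun i => ?_⟩
  have := hy i
  have hval : γ t i = y i + t * (L / 2 - y i) := by simp [γ]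
  simp only [Set.mem_preimage, Set.mem_Ioo, hval]
  constructor
  · nlinarith [this.1, mul_pos ht0 hL, mul_nonneg (sub_nonneg.2 ht1.le) this.1]
  · nlinarith [this.2, mul_pos ht0 hL, mul_pos (sub_pos.2 ht1) (sub_pos.2 this.2)]

end Box

/-! ### Energy, weight and the Hölder step -/

section Energy
variable {n k : ℕ} {s L : ℝ}

local notation "𝔼" n => EuclideanSpace ℝ (Fin n)

/-- The energy `∫ (a_k |∇v|² + s v²)` over one period box. -/
def perEnergy (n k : ℕ) (s L : ℝ) (v : (𝔼 n) → ℝ) : ℝ :=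
  ∫ x in periodBox n L, (aK k * ‖gradient v x‖ ^ 2 + s * (v x) ^ 2)

/-- The weighted `L²` norm squared `∫ u^{p_k-2} v²` over one period box. -/
def perWeight (n k : ℕ) (L : ℝ) (u v : (𝔼 n) → ℝ) : ℝ :=
  ∫ x in periodBox n L, u x ^ (pK k - 2) * (v x) ^ 2

lemma norm_gradient_eq (v : (𝔼 n) → ℝ) (x : 𝔼 n) : ‖gradient v x‖ = ‖fderiv ℝ v x‖ := by
  simp [gradient]

lemma aK_nonneg (hk : 3 ≤ k) : 0 ≤ aK k := by
  have : (3 : ℝ) ≤ k := by exact_mod_cast hk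
  unfold aK
  apply div_nonneg <;> linarith

lemma two_lt_pK (hk : 3 ≤ k) : 2 < pK k := by
  have : (3 : ℝ) ≤ k := by exact_mod_cast hk
  unfold pK
  rw [lt_div_iff₀ (by linarith)]
  linarith

lemma pK_exponent (hk : 3 ≤ k) : (pK k - 2) * ((k : ℝ) / 2) = pK k := by
  have : (3 : ℝ) ≤ k := by exact_mod_cast hk
  have h2 : (k : ℝ) - 2 ≠ 0 := by linarith
  unfold pK
  field_simp
  ring

lemma holderConjugate_pK (hk : 3 ≤ k) : ((k : ℝ) / 2).HolderConjugate (pK k / 2) := by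
  have : (3 : ℝ) ≤ k := by exact_mod_cast hk
  have h2 : (k : ℝ) - 2 ≠ 0 := by linarith
  rw [Real.holderConjugate_iff]
  refine ⟨by linarith, ?_⟩
  unfold pK
  field_simp
  ring

lemma perEnergy_nonneg (hk : 3 ≤ k) (hs : 0 < s) (v : (𝔼 n) → ℝ) :
    0 ≤ perEnergy n k s L v := by
  refine integral_nonneg fun x => ?_
  have := aK_nonneg hk
  positivity

/-- The Yamabe functional bounds `Y_per` from above, in product form. -/
lemma yPer_mul_le (hk : 3 ≤ k) (hs : 0 < s) (hL : 0 < L) {w : (𝔼 n) → ℝ}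
    (hw : ContDiff ℝ (⊤ : ℕ∞) w) (hper : IsPeriodicFun n L w) (hne : w ≠ 0) :
    0 < (∫ x in periodBox n L, |w x| ^ pK k) ^ (2 / pK k) ∧
    yPer n k s L * (∫ x in periodBox n L, |w x| ^ pK k) ^ (2 / pK k) ≤ perEnergy n k s L w := by
  have hp := two_lt_pK hk
  have hpos : 0 < (∫ x in periodBox n L, |w x| ^ pK k) ^ (2 / pK k) := by
    apply Real.rpow_pos_of_pos
    apply IsPeriodicFun.integral_pos hL
    · intro x i
      simp only [hper x i]
    · exact (hw.continuous.abs).rpow_const fun x => Or.inr (by linarith)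
    · intro x
      positivity
    · obtain ⟨x, hx⟩ := Function.ne_iff.1 hne
      refine Function.ne_iff.2 ⟨x, ?_⟩
      exact (Real.rpow_pos_of_pos (abs_pos.2 hx) _).ne'
  refine ⟨hpos, ?_⟩
  rw [← le_div_iff₀ hpos]
  refine csInf_le ⟨0, ?_⟩ ⟨w, hw, hper, hne, rfl⟩
  rintro r ⟨v, -, -, -, rfl⟩
  refine div_nonneg (perEnergy_nonneg hk hs v) (Real.rpow_nonneg ?_ _)
  exact integral_nonneg fun x => by positivity

/-- Hölder's inequality on the support of the test function. -/
lemma perWeight_le (hk : 3 ≤ k) {u w : (𝔼 n) → ℝ}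
    (hu : Continuous u) (hupos : ∀ x, 0 < u x) (hw : Continuous w) :
    perWeight n k L u w ≤
      (∫ x in periodBox n L ∩ Function.support w, u x ^ pK k) ^ (2 / (k : ℝ)) *
      (∫ x in periodBox n L, |w x| ^ pK k) ^ (2 / pK k) := by
  have hp := two_lt_pK hk
  have hB : MeasurableSet (periodBox n L) := measurableSet_periodBox
  set S := periodBox n L ∩ Function.support w with hS
  have hSm : MeasurableSet S := hB.inter hw.isOpen_support.measurableSet
  have hSB : S ⊆ periodBox n L := Set.inter_subset_left
  have hfin : IsFiniteMeasure (volume.restrict S) :=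
    ⟨by rw [Measure.restrict_apply_univ]
        exact (measure_mono hSB).trans_lt volume_periodBox_lt_top⟩
  have hmem : ∀ {f : (𝔼 n) → ℝ} {q : ENNReal}, Continuous f → MemLp f q (volume.restrict S) := by
    intro f q hf
    obtain ⟨C, hC⟩ := exists_bound_periodBox (L := L) hf
    exact MemLp.of_bound hf.aestronglyMeasurable C
      ((ae_restrict_iff' hSm).2 (Filter.Eventually.of_forall fun x hx => hC x (hSB hx)))
  have huc : ∀ r : ℝ, Continuous fun x => u x ^ r := fun r =>
    hu.rpow_const fun x => Or.inl (hupos x).ne'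
  have h1 : perWeight n k L u w = ∫ x in S, u x ^ (pK k - 2) * (w x) ^ 2 := by
    refine setIntegral_eq_of_subset_of_forall_sdiff_eq_zero hB hSB fun x hx => ?_
    have : w x = 0 := by
      by_contra h
      exact hx.2 ⟨hx.1, h⟩
    rw [this]; simp
  have h2 := integral_mul_le_Lp_mul_Lq_of_nonneg (μ := volume.restrict S) (holderConjugate_pK hk)
    (f := fun x => u x ^ (pK k - 2)) (g := fun x => w x ^ 2)
    (Filter.Eventually.of_forall fun x => (Real.rpow_pos_of_pos (hupos x) _).le)
    (Filter.Eventually.of_forall fun x => sq_nonneg _)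
    (hmem (huc _)) (hmem (hw.pow 2))
  have h3 : ∀ x, (u x ^ (pK k - 2)) ^ ((k : ℝ) / 2) = u x ^ pK k := fun x => by
    rw [← Real.rpow_mul (hupos x).le, pK_exponent hk]
  have h4 : ∀ x, (w x ^ 2) ^ (pK k / 2) = |w x| ^ pK k := fun x => by
    rw [← sq_abs, ← Real.rpow_natCast, ← Real.rpow_mul (abs_nonneg _)]
    congr 1
    push_cast
    ring
  simp only [h3, h4, one_div_div] at h2
  rw [h1]
  refine h2.trans (mul_le_mul_of_nonneg_left ?_ (Real.rpow_nonneg ?_ _))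
  · refine Real.rpow_le_rpow (integral_nonneg fun x => by positivity) ?_ (by positivity)
    refine setIntegral_mono_set (integrableOn_periodBox ?_)
      (Filter.Eventually.of_forall fun x => by positivity) hSB.eventuallyLE
    exact hw.abs.rpow_const fun x => Or.inr (by linarith)
  · exact integral_nonneg fun x => (Real.rpow_pos_of_pos (hupos x) _).le

lemma yPer_le_of_energy_le (hk : 3 ≤ k) (hs : 0 < s) (hL : 0 < L) {u w : (𝔼 n) → ℝ} {ν : ℝ}
    (hν : 0 ≤ ν) (hu : Continuous u) (hupos : ∀ x, 0 < u x)
    (hw : ContDiff ℝ (⊤ : ℕ∞) w) (hper : IsPeriodicFun n L w) (hne : w ≠ 0)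
    (hE : perEnergy n k s L w ≤ ν * perWeight n k L u w) :
    yPer n k s L ≤
      ν * (∫ x in periodBox n L ∩ Function.support w, u x ^ pK k) ^ (2 / (k : ℝ)) := by
  obtain ⟨hpos, h1⟩ := yPer_mul_le (k := k) hk hs hL hw hper hne
  refine le_of_mul_le_mul_right (h1.trans (hE.trans ?_)) hpos
  rw [mul_assoc]
  exact mul_le_mul_of_nonneg_left (perWeight_le hk hu hupos hw.continuous) hν

/-- Two admissible test functions with disjoint supports: the smaller of the two masses of `u` is
at most half of the total mass. -/
lemma two_rpow_mul_yPer_le (hk : 3 ≤ k) (hs : 0 < s) (hL : 0 < L) {u w₁ w₂ : (𝔼 n) → ℝ} {ν : ℝ}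
    (hν : 0 ≤ ν) (hu : Continuous u) (hupos : ∀ x, 0 < u x)
    (hw₁ : ContDiff ℝ (⊤ : ℕ∞) w₁) (hper₁ : IsPeriodicFun n L w₁) (hne₁ : w₁ ≠ 0)
    (hE₁ : perEnergy n k s L w₁ ≤ ν * perWeight n k L u w₁)
    (hw₂ : ContDiff ℝ (⊤ : ℕ∞) w₂) (hper₂ : IsPeriodicFun n L w₂) (hne₂ : w₂ ≠ 0)
    (hE₂ : perEnergy n k s L w₂ ≤ ν * perWeight n k L u w₂)
    (hdisj : Disjoint (Function.support w₁) (Function.support w₂)) :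
    2 ^ (2 / (k : ℝ)) * yPer n k s L ≤
      ν * (∫ x in periodBox n L, u x ^ pK k) ^ (2 / (k : ℝ)) := by
  have hB : MeasurableSet (periodBox n L) := measurableSet_periodBox
  have hS : ∀ {w : (𝔼 n) → ℝ}, ContDiff ℝ (⊤ : ℕ∞) w →
      MeasurableSet (periodBox n L ∩ Function.support w) := fun hw =>
    hB.inter hw.continuous.isOpen_support.measurableSet
  have hint : IntegrableOn (fun x => u x ^ pK k) (periodBox n L) :=
    integrableOn_periodBox (hu.rpow_const fun x => Or.inl (hupos x).ne')
  have hnn : ∀ x, 0 ≤ u x ^ pK k := fun x => (Real.rpow_pos_of_pos (hupos x) _).le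
  have h₁ := yPer_le_of_energy_le hk hs hL hν hu hupos hw₁ hper₁ hne₁ hE₁
  have h₂ := yPer_le_of_energy_le hk hs hL hν hu hupos hw₂ hper₂ hne₂ hE₂
  set A := ∫ x in periodBox n L ∩ Function.support w₁, u x ^ pK k
  set B := ∫ x in periodBox n L ∩ Function.support w₂, u x ^ pK k
  set I := ∫ x in periodBox n L, u x ^ pK k
  have hA : 0 ≤ A := integral_nonneg hnn
  have hB0 : 0 ≤ B := integral_nonneg hnn
  have hsum : A + B ≤ I := by
    rw [← setIntegral_union (hdisj.mono Set.inter_subset_right Set.inter_subset_right) (hS hw₂)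
      (hint.mono_set Set.inter_subset_left) (hint.mono_set Set.inter_subset_left)]
    exact setIntegral_mono_set hint (Filter.Eventually.of_forall hnn)
      (Set.union_subset Set.inter_subset_left Set.inter_subset_left).eventuallyLE
  have hk0 : 0 ≤ 2 / (k : ℝ) := by positivity
  have key : ∀ C, 0 ≤ C → 2 * C ≤ I → yPer n k s L ≤ ν * C ^ (2 / (k : ℝ)) →
      2 ^ (2 / (k : ℝ)) * yPer n k s L ≤ ν * I ^ (2 / (k : ℝ)) := by
    intro C hC hCI hY
    calc 2 ^ (2 / (k : ℝ)) * yPer n k s L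
        ≤ 2 ^ (2 / (k : ℝ)) * (ν * C ^ (2 / (k : ℝ))) :=
          mul_le_mul_of_nonneg_left hY (by positivity)
      _ = ν * (2 * C) ^ (2 / (k : ℝ)) := by
          rw [Real.mul_rpow (by norm_num) hC]; ring
      _ ≤ ν * I ^ (2 / (k : ℝ)) :=
          mul_le_mul_of_nonneg_left (Real.rpow_le_rpow (by positivity) hCI hk0) hν
  rcases le_total A B with h | h
  · exact key A hA (by linarith) h₁
  · exact key B hB0 (by linarith) h₂

end Energy

/-! ### Two-dimensional families of test functions -/

section Pencil
variable {n k : ℕ} {s L : ℝ}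

local notation "𝔼" n => EuclideanSpace ℝ (Fin n)

/-- The linear combination `(re z) v₁ + (im z) v₂`; the coefficient plane is identified with `ℂ`,
whose unit sphere is compact and connected. -/
def lin (v₁ v₂ : (𝔼 n) → ℝ) (z : ℂ) : (𝔼 n) → ℝ := fun x => z.re * v₁ x + z.im * v₂ x

lemma lin_neg (v₁ v₂ : (𝔼 n) → ℝ) (z : ℂ) (x : 𝔼 n) :
    lin v₁ v₂ (-z) x = -lin v₁ v₂ z x := by
  simp [lin]; ring

lemma lin_contDiff {v₁ v₂ : (𝔼 n) → ℝ} (h₁ : ContDiff ℝ (⊤ : ℕ∞) v₁)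
    (h₂ : ContDiff ℝ (⊤ : ℕ∞) v₂) (z : ℂ) : ContDiff ℝ (⊤ : ℕ∞) (lin v₁ v₂ z) :=
  (contDiff_const.mul h₁).add (contDiff_const.mul h₂)

lemma lin_periodic {v₁ v₂ : (𝔼 n) → ℝ} (h₁ : IsPeriodicFun n L v₁)
    (h₂ : IsPeriodicFun n L v₂) (z : ℂ) : IsPeriodicFun n L (lin v₁ v₂ z) := fun x i => by
  simp only [lin, h₁ x i, h₂ x i]

lemma fderiv_lin {v₁ v₂ : (𝔼 n) → ℝ} (h₁ : ContDiff ℝ (⊤ : ℕ∞) v₁)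
    (h₂ : ContDiff ℝ (⊤ : ℕ∞) v₂) (z : ℂ) (x : 𝔼 n) :
    fderiv ℝ (lin v₁ v₂ z) x = z.re • fderiv ℝ v₁ x + z.im • fderiv ℝ v₂ x := by
  have d₁ := ((h₁.differentiable (by simp)) x).hasFDerivAt
  have d₂ := ((h₂.differentiable (by simp)) x).hasFDerivAt
  exact ((d₁.const_mul z.re).add (d₂.const_mul z.im)).fderiv

lemma fderiv_phi_comp (ε : ℝ) {w : (𝔼 n) → ℝ} (hw : ContDiff ℝ (⊤ : ℕ∞) w) (x : 𝔼 n) :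
    fderiv ℝ (fun y => phi ε (w y)) x = deriv (phi ε) (w x) • fderiv ℝ w x := by
  have d₁ := ((hw.differentiable (by simp)) x).hasFDerivAt
  have d₂ := (((phi_contDiff ε).differentiable (by simp)) (w x)).hasDerivAt
  exact (d₂.comp_hasFDerivAt x d₁).fderiv

lemma continuous_deriv_phi (ε : ℝ) : Continuous (deriv (phi ε)) :=
  (phi_contDiff ε).continuous_deriv (by simp)

lemma continuous_lin {v₁ v₂ : (𝔼 n) → ℝ} (h₁ : Continuous v₁) (h₂ : Continuous v₂) :
    Continuous fun q : ℂ × (𝔼 n) => lin v₁ v₂ q.1 q.2 := by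
  unfold lin
  have := Complex.continuous_re
  have := Complex.continuous_im
  fun_prop

lemma continuous_fderiv_lin {v₁ v₂ : (𝔼 n) → ℝ} (h₁ : ContDiff ℝ (⊤ : ℕ∞) v₁)
    (h₂ : ContDiff ℝ (⊤ : ℕ∞) v₂) :
    Continuous fun q : ℂ × (𝔼 n) => fderiv ℝ (lin v₁ v₂ q.1) q.2 := by
  simp only [fderiv_lin h₁ h₂]
  have := Complex.continuous_re
  have := Complex.continuous_im
  have c₁ := h₁.continuous_fderiv (by simp)
  have c₂ := h₂.continuous_fderiv (by simp)
  fun_prop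

lemma continuous_perEnergy_lin {v₁ v₂ : (𝔼 n) → ℝ} (h₁ : ContDiff ℝ (⊤ : ℕ∞) v₁)
    (h₂ : ContDiff ℝ (⊤ : ℕ∞) v₂) : Continuous fun z => perEnergy n k s L (lin v₁ v₂ z) := by
  refine continuous_integral_periodBox ?_
  have c := continuous_lin h₁.continuous h₂.continuous
  have d := continuous_fderiv_lin h₁ h₂
  simp only [norm_gradient_eq]
  exact (continuous_const.mul (d.norm.pow 2)).add (continuous_const.mul (c.pow 2))

lemma continuous_perEnergy_phi {v₁ v₂ : (𝔼 n) → ℝ} (ε : ℝ) (h₁ : ContDiff ℝ (⊤ : ℕ∞) v₁)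
    (h₂ : ContDiff ℝ (⊤ : ℕ∞) v₂) :
    Continuous fun z => perEnergy n k s L (fun x => phi ε (lin v₁ v₂ z x)) := by
  refine continuous_integral_periodBox ?_
  have c := continuous_lin h₁.continuous h₂.continuous
  have d := continuous_fderiv_lin h₁ h₂
  simp only [norm_gradient_eq, fderiv_phi_comp ε (lin_contDiff h₁ h₂ _)]
  exact (continuous_const.mul ((((continuous_deriv_phi ε).comp c).smul d).norm.pow 2)).add
    (continuous_const.mul (((phi_contDiff ε).continuous.comp c).pow 2))

lemma continuous_perWeight {u : (𝔼 n) → ℝ} {f : ℂ → (𝔼 n) → ℝ} (hu : Continuous u)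
    (hupos : ∀ x, 0 < u x) (hf : Continuous fun q : ℂ × (𝔼 n) => f q.1 q.2) :
    Continuous fun z => perWeight n k L u (f z) := by
  refine continuous_integral_periodBox ?_
  have hur : Continuous fun x => u x ^ (pK k - 2) := hu.rpow_const fun x => Or.inl (hupos x).ne'
  exact (hur.comp continuous_snd).mul (hf.pow 2)

lemma perWeight_pos (hL : 0 < L) {u v : (𝔼 n) → ℝ} (hu : Continuous u) (hupos : ∀ x, 0 < u x)
    (huper : IsPeriodicFun n L u) (hv : Continuous v) (hvper : IsPeriodicFun n L v)
    (hne : v ≠ 0) : 0 < perWeight n k L u v := by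
  have hur : Continuous fun x => u x ^ (pK k - 2) := hu.rpow_const fun x => Or.inl (hupos x).ne'
  refine IsPeriodicFun.integral_pos hL (fun x i => ?_) (hur.mul (hv.pow 2)) (fun x => ?_) ?_
  · simp only [huper x i, hvper x i]
  · exact mul_nonneg (Real.rpow_pos_of_pos (hupos x) _).le (sq_nonneg _)
  · obtain ⟨x, hx⟩ := Function.ne_iff.1 hne
    exact Function.ne_iff.2 ⟨x, mul_ne_zero (Real.rpow_pos_of_pos (hupos x) _).ne'
      (pow_ne_zero 2 hx)⟩

/-- Splitting `w` into its two smoothed parts does not increase the energy. -/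
lemma perEnergy_split (hk : 3 ≤ k) (hs : 0 < s) {ε : ℝ} (hε : 0 < ε) {w : (𝔼 n) → ℝ}
    (hw : ContDiff ℝ (⊤ : ℕ∞) w) :
    perEnergy n k s L (fun x => phi ε (w x)) + perEnergy n k s L (fun x => phi ε (-w x)) ≤
      perEnergy n k s L w := by
  have d := hw.continuous_fderiv (by simp)
  have c := hw.continuous
  have cp := (phi_contDiff ε).continuous
  have cd := continuous_deriv_phi ε
  have ha := aK_nonneg hk
  unfold perEnergy
  simp only [norm_gradient_eq, fderiv_phi_comp ε hw, fderiv_phi_comp ε hw.neg]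
  have hneg : ∀ x, fderiv ℝ (fun y => -w y) x = -fderiv ℝ w x := fun x => fderiv_fun_neg
  simp only [hneg, norm_smul, norm_neg, mul_pow, Real.norm_eq_abs, sq_abs]
  rw [← integral_add]
  · refine setIntegral_mono (integrableOn_periodBox (by fun_prop))
      (integrableOn_periodBox (by fun_prop)) fun x => ?_
    have h1 := deriv_phi_sq_add_le hε (w x)
    have h2 := phi_sq_add_le hε (w x)
    have h3 := mul_le_mul_of_nonneg_left h1 (mul_nonneg ha (sq_nonneg ‖fderiv ℝ w x‖))
    have h4 := mul_le_mul_of_nonneg_left h2 hs.le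
    show _ ≤ _
    nlinarith
  · exact integrableOn_periodBox (by fun_prop)
  · exact integrableOn_periodBox (by fun_prop)

/-- Splitting `w` into its two smoothed parts loses only `O(ε)` of the weight. -/
lemma perWeight_split {ε : ℝ} (hε : 0 < ε) {u w : (𝔼 n) → ℝ} (hu : Continuous u)
    (hupos : ∀ x, 0 < u x) (hw : Continuous w) :
    perWeight n k L u w - 2 * ε * (∫ x in periodBox n L, u x ^ (pK k - 2) * |w x|) ≤
      perWeight n k L u (fun x => phi ε (w x)) + perWeight n k L u (fun x => phi ε (-w x)) := by
  have hur : Continuous fun x => u x ^ (pK k - 2) := hu.rpow_const fun x => Or.inl (hupos x).ne'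
  have cp := (phi_contDiff ε).continuous
  unfold perWeight
  rw [← integral_const_mul, ← integral_add, ← integral_sub]
  · refine setIntegral_mono (integrableOn_periodBox (by fun_prop))
      (integrableOn_periodBox (by fun_prop)) fun x => ?_
    have h1 := le_phi_sq_add hε (w x)
    have h3 := mul_le_mul_of_nonneg_left h1 (Real.rpow_pos_of_pos (hupos x) (pK k - 2)).le
    show _ ≤ _
    nlinarith
  all_goals exact integrableOn_periodBox (by fun_prop)

/-- If `E - ν W` is negative definite on a plane of test functions, then an antipodal argument on
the unit circle of that plane yields one function both of whose smoothed parts have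
`E - ν W < 0`; hence the lower bound for `ν`. -/
lemma two_rpow_mul_yPer_le_of_pencil (hk : 3 ≤ k) (hs : 0 < s) (hL : 0 < L)
    {u v₁ v₂ : (𝔼 n) → ℝ} {ν : ℝ} (hν : 0 ≤ ν) (hu : Continuous u) (hupos : ∀ x, 0 < u x)
    (h₁ : ContDiff ℝ (⊤ : ℕ∞) v₁) (h₂ : ContDiff ℝ (⊤ : ℕ∞) v₂)
    (p₁ : IsPeriodicFun n L v₁) (p₂ : IsPeriodicFun n L v₂)
    (hQ : ∀ z : ℂ, z ≠ 0 →
      perEnergy n k s L (lin v₁ v₂ z) < ν * perWeight n k L u (lin v₁ v₂ z)) :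
    2 ^ (2 / (k : ℝ)) * yPer n k s L ≤
      ν * (∫ x in periodBox n L, u x ^ pK k) ^ (2 / (k : ℝ)) := by
  have hlin := continuous_lin h₁.continuous h₂.continuous
  have hur : Continuous fun x => u x ^ (pK k - 2) := hu.rpow_const fun x => Or.inl (hupos x).ne'
  have hone : (1 : ℂ) ∈ Metric.sphere (0 : ℂ) 1 := by simp
  -- `E - ν W` is bounded away from `0` on the unit circle
  obtain ⟨z₀, hz₀, hmax⟩ := (isCompact_sphere (0 : ℂ) 1).exists_isMaxOn ⟨1, hone⟩
    (f := fun z => perEnergy n k s L (lin v₁ v₂ z) - ν * perWeight n k L u (lin v₁ v₂ z))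
    (((continuous_perEnergy_lin h₁ h₂).sub
      (continuous_const.mul (continuous_perWeight hu hupos hlin))).continuousOn)
  have hz₀' := hQ z₀ (by rintro rfl; simp at hz₀)
  set δ := ν * perWeight n k L u (lin v₁ v₂ z₀) - perEnergy n k s L (lin v₁ v₂ z₀) with hδ
  have hδ0 : 0 < δ := by linarith
  obtain ⟨z₁, hz₁, hmax₁⟩ := (isCompact_sphere (0 : ℂ) 1).exists_isMaxOn ⟨1, hone⟩
    (f := fun z => ∫ x in periodBox n L, u x ^ (pK k - 2) * |lin v₁ v₂ z x|)
    (continuous_integral_periodBox ((hur.comp continuous_snd).mul hlin.abs)).continuousOn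
  set M := ∫ x in periodBox n L, u x ^ (pK k - 2) * |lin v₁ v₂ z₁ x|
  have hM : 0 ≤ M := integral_nonneg fun x =>
    mul_nonneg (Real.rpow_pos_of_pos (hupos x) _).le (abs_nonneg _)
  -- the weight lost by the smoothing costs at most `2 ν ε M < δ`
  obtain ⟨ε, hε, hεδ⟩ : ∃ ε : ℝ, 0 < ε ∧ ν * (2 * ε * M) < δ := by
    refine ⟨δ / (2 * (ν * M + 1)), by positivity, ?_⟩
    have : 0 ≤ ν * M := mul_nonneg hν hM
    have e : ν * (2 * (δ / (2 * (ν * M + 1))) * M) = δ * ((ν * M) / (ν * M + 1)) := by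
      field_simp
    rw [e]
    have : (ν * M) / (ν * M + 1) < 1 := by rw [div_lt_one (by linarith)]; linarith
    nlinarith
  let F : ℂ → ℝ := fun z => perEnergy n k s L (fun x => phi ε (lin v₁ v₂ z x)) -
    ν * perWeight n k L u (fun x => phi ε (lin v₁ v₂ z x))
  have hF : Continuous F := (continuous_perEnergy_phi ε h₁ h₂).sub (continuous_const.mul
    (continuous_perWeight hu hupos ((phi_contDiff ε).continuous.comp hlin)))
  have hFneg : ∀ z ∈ Metric.sphere (0 : ℂ) 1, F z + F (-z) < 0 := by
    intro z hz
    have a1 := perEnergy_split (L := L) hk hs hε (lin_contDiff h₁ h₂ z)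
    have a2 := perWeight_split (k := k) (L := L) hε hu hupos (lin_contDiff h₁ h₂ z).continuous
    have a3 := hmax hz
    have a4 := hmax₁ hz
    simp only [Set.mem_ofPred_eq] at a3 a4
    have a5 := mul_le_mul_of_nonneg_left a2 hν
    have a6 := mul_le_mul_of_nonneg_left
      (mul_le_mul_of_nonneg_left a4 (by positivity : 0 ≤ 2 * ε)) hν
    simp only [F, lin_neg]
    nlinarith
  -- an odd continuous function on the circle has a zero
  obtain ⟨z, hz, hGz⟩ : ∃ z ∈ Metric.sphere (0 : ℂ) 1, F z - F (-z) = 0 := by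
    have hpre : IsPreconnected (Metric.sphere (0 : ℂ) 1) :=
      isPreconnected_sphere (by rw [Complex.rank_real_complex]; norm_num) 0 1
    have hmone : (-1 : ℂ) ∈ Metric.sphere (0 : ℂ) 1 := by simp
    have hG : ContinuousOn (fun z => F z - F (-z)) (Metric.sphere (0 : ℂ) 1) :=
      (hF.sub (hF.comp continuous_neg)).continuousOn
    rcases le_total (F 1) (F (-1)) with h | h
    · obtain ⟨z, hz, h0⟩ := hpre.intermediate_value hone hmone hG
        (show (0 : ℝ) ∈ _ by simp only [Set.mem_Icc, neg_neg]; constructor <;> linarith)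
      exact ⟨z, hz, h0⟩
    · obtain ⟨z, hz, h0⟩ := hpre.intermediate_value hmone hone hG
        (show (0 : ℝ) ∈ _ by simp only [Set.mem_Icc, neg_neg]; constructor <;> linarith)
      exact ⟨z, hz, h0⟩
  have hsum := hFneg z hz
  have hFz : F z < 0 := by linarith
  have hFz' : F (-z) < 0 := by linarith
  -- a vanishing test function would give `F z ≥ 0`
  have hne : ∀ z, F z < 0 → (fun x => phi ε (lin v₁ v₂ z x)) ≠ 0 := by
    intro z hz h0
    simp only [F, h0] at hz
    have e : perWeight n k L u (0 : (𝔼 n) → ℝ) = 0 := by simp [perWeight]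
    have := perEnergy_nonneg (L := L) hk hs (0 : (𝔼 n) → ℝ)
    rw [e] at hz
    linarith
  have hsm : ∀ z, ContDiff ℝ (⊤ : ℕ∞) (fun x => phi ε (lin v₁ v₂ z x)) := fun z =>
    (phi_contDiff ε).comp (lin_contDiff h₁ h₂ z)
  have hpe : ∀ z, IsPeriodicFun n L (fun x => phi ε (lin v₁ v₂ z x)) := fun z x i => by
    simp only [lin_periodic p₁ p₂ z x i]
  refine two_rpow_mul_yPer_le hk hs hL hν hu hupos (hsm z) (hpe z) (hne z hFz)
    (by linarith) (hsm (-z)) (hpe (-z)) (hne (-z) hFz') (by linarith) ?_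
  rw [Set.disjoint_left]
  intro x hx hx'
  simp only [Function.mem_support, lin_neg] at hx hx'
  rcases le_total (lin v₁ v₂ z x) 0 with h | h
  · exact hx (phi_of_nonpos hε h)
  · exact hx' (phi_of_nonpos hε (by linarith))

end Pencil

/-! ### The supremum over a plane, and existence of admissible pairs -/

section Sup
variable {n k : ℕ} {s L : ℝ}

local notation "𝔼" n => EuclideanSpace ℝ (Fin n)

lemma lin_smul (v₁ v₂ : (𝔼 n) → ℝ) (c : ℝ) (z : ℂ) :
    lin v₁ v₂ (c • z) = fun x => c * lin v₁ v₂ z x := by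
  funext x
  simp [lin]; ring

lemma perEnergy_lin_smul {v₁ v₂ : (𝔼 n) → ℝ} (h₁ : ContDiff ℝ (⊤ : ℕ∞) v₁)
    (h₂ : ContDiff ℝ (⊤ : ℕ∞) v₂) (c : ℝ) (z : ℂ) :
    perEnergy n k s L (lin v₁ v₂ (c • z)) = c ^ 2 * perEnergy n k s L (lin v₁ v₂ z) := by
  have hf : ∀ x, fderiv ℝ (lin v₁ v₂ (c • z)) x = c • fderiv ℝ (lin v₁ v₂ z) x := fun x => by
    simp [fderiv_lin h₁ h₂, smul_smul]
  unfold perEnergy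
  rw [← integral_const_mul]
  congr 1
  funext x
  rw [norm_gradient_eq, norm_gradient_eq, hf, norm_smul, mul_pow, Real.norm_eq_abs, sq_abs,
    lin_smul]
  ring

lemma perWeight_lin_smul (u v₁ v₂ : (𝔼 n) → ℝ) (c : ℝ) (z : ℂ) :
    perWeight n k L u (lin v₁ v₂ (c • z)) = c ^ 2 * perWeight n k L u (lin v₁ v₂ z) := by
  unfold perWeight
  rw [← integral_const_mul, lin_smul]
  congr 1
  funext x
  ring

/-- By homogeneity and compactness of the unit circle, the Rayleigh quotient is bounded on a
plane of test functions. -/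
lemma exists_rayleigh_bound (hL : 0 < L) {u v₁ v₂ : (𝔼 n) → ℝ} (hu : Continuous u)
    (hupos : ∀ x, 0 < u x) (huper : IsPeriodicFun n L u)
    (h₁ : ContDiff ℝ (⊤ : ℕ∞) v₁) (h₂ : ContDiff ℝ (⊤ : ℕ∞) v₂)
    (p₁ : IsPeriodicFun n L v₁) (p₂ : IsPeriodicFun n L v₂)
    (hne : ∀ z : ℂ, z ≠ 0 → lin v₁ v₂ z ≠ 0) :
    ∃ C, ∀ z : ℂ, z ≠ 0 →
      perEnergy n k s L (lin v₁ v₂ z) / perWeight n k L u (lin v₁ v₂ z) ≤ C := by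
  have hW : ∀ z : ℂ, z ≠ 0 → 0 < perWeight n k L u (lin v₁ v₂ z) := fun z hz =>
    perWeight_pos hL hu hupos huper (lin_contDiff h₁ h₂ z).continuous (lin_periodic p₁ p₂ z)
      (hne z hz)
  have hlin := continuous_lin h₁.continuous h₂.continuous
  obtain ⟨C, hC⟩ := (isCompact_sphere (0 : ℂ) 1).exists_bound_of_continuousOn
    (f := fun z => perEnergy n k s L (lin v₁ v₂ z) / perWeight n k L u (lin v₁ v₂ z))
    ((continuous_perEnergy_lin h₁ h₂).continuousOn.div
      (continuous_perWeight hu hupos hlin).continuousOn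
      fun z hz => (hW z (by rintro rfl; simp at hz)).ne')
  refine ⟨C, fun z hz => ?_⟩
  have hz' : ‖z‖ ≠ 0 := norm_ne_zero_iff.2 hz
  have hb := (le_abs_self _).trans (hC (‖z‖⁻¹ • z) (by simp [hz']))
  rw [perEnergy_lin_smul h₁ h₂, perWeight_lin_smul,
    mul_div_mul_left _ _ (pow_ne_zero 2 (inv_ne_zero hz'))] at hb
  exact hb

/-- An admissible pair: `u = 1` and the plane spanned by `1` and `cos (2π x₁ / L)`. -/
lemma y2PerSet_nonempty (hn : 1 ≤ n) (hL : 0 < L) : (y2PerSet n k s L).Nonempty := by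
  let i₀ : Fin n := ⟨0, hn⟩
  let f : (𝔼 n) → ℝ := fun _ => 1
  let g : (𝔼 n) → ℝ := fun x => Real.cos (2 * Real.pi / L * x i₀)
  have hf : ContDiff ℝ (⊤ : ℕ∞) f := contDiff_const
  have hg : ContDiff ℝ (⊤ : ℕ∞) g := by
    refine Real.contDiff_cos.comp (contDiff_const.mul ?_)
    exact (EuclideanSpace.proj (𝕜 := ℝ) i₀ : (𝔼 n) →L[ℝ] ℝ).contDiff
  have hfp : IsPeriodicFun n L f := fun _ _ => rfl
  have hgp : IsPeriodicFun n L g := fun x i => by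
    by_cases h : i₀ = i
    · have e : 2 * Real.pi / L * (x + L • EuclideanSpace.single i (1 : ℝ)) i₀
          = 2 * Real.pi / L * x i₀ + 2 * Real.pi := by
        simp [h]; field_simp
      simp only [g]
      rw [e, Real.cos_add_two_pi]
    · simp [g, h]
  have hli : LinearIndependent ℝ ![f, g] := by
    rw [LinearIndependent.pair_iff]
    intro a b hab
    -- evaluate at points where the cosine is `1` and `-1`
    have e0 := congrFun hab 0
    have e1 := congrFun hab ((L / 2) • EuclideanSpace.single i₀ (1 : ℝ))
    have e2 : 2 * Real.pi / L * (L / 2) = Real.pi := by field_simp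
    simp [f, g, e2] at e0 e1
    constructor <;> linarith
  refine ⟨_, f, Submodule.span ℝ (Set.range ![f, g]), hf, hfp, fun _ => one_pos, ?_, ?_, rfl⟩
  · rw [finrank_span_eq_card hli]; simp
  · intro v hv
    rw [Matrix.range_cons, Matrix.range_cons, Matrix.range_empty, Set.union_empty,
      Set.singleton_union, Submodule.mem_span_pair] at hv
    obtain ⟨a, b, rfl⟩ := hv
    refine ⟨(contDiff_const.mul hf).add (contDiff_const.mul hg), fun x i => ?_⟩
    simp only [Pi.add_apply, Pi.smul_apply, hfp x i, hgp x i]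

lemma two_rpow_mul_yPer_le_of_mem (hk : 3 ≤ k) (hs : 0 < s) (hL : 0 < L) {r : ℝ}
    (hr : r ∈ y2PerSet n k s L) : 2 ^ (2 / (k : ℝ)) * yPer n k s L ≤ r := by
  obtain ⟨u, V, hu, huper, hupos, hV, hVs, hr⟩ := hr
  have huc := hu.continuous
  have : Module.Finite ℝ V := Module.finite_of_finrank_pos (by omega)
  let b := Module.finBasisOfFinrankEq ℝ V hV
  set v₁ : (𝔼 n) → ℝ := (b 0).1
  set v₂ : (𝔼 n) → ℝ := (b 1).1
  obtain ⟨h₁, p₁⟩ := hVs v₁ (b 0).2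
  obtain ⟨h₂, p₂⟩ := hVs v₂ (b 1).2
  have hlin : ∀ z : ℂ, lin v₁ v₂ z = ((z.re • b 0 + z.im • b 1 : V) : (𝔼 n) → ℝ) := fun z => by
    funext x
    simp [lin, v₁, v₂]
  have hli : LinearIndependent ℝ ![b 0, b 1] := by
    convert b.linearIndependent using 1
    funext i
    fin_cases i <;> rfl
  have hne : ∀ z : ℂ, z ≠ 0 → lin v₁ v₂ z ≠ 0 := by
    intro z hz h0
    rw [hlin] at h0
    have := LinearIndependent.pair_iff.1 hli z.re z.im (Subtype.ext h0)
    exact hz (Complex.ext this.1 this.2)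
  have hrep : ∀ v ∈ V, ∃ z : ℂ, v = lin v₁ v₂ z := by
    intro v hv
    refine ⟨⟨b.repr ⟨v, hv⟩ 0, b.repr ⟨v, hv⟩ 1⟩, ?_⟩
    rw [hlin]
    have := b.sum_repr ⟨v, hv⟩
    rw [Fin.sum_univ_two] at this
    rw [this]
  set I := ∫ x in periodBox n L, u x ^ pK k with hI
  have hIpos : 0 < I ^ (2 / (k : ℝ)) := by
    refine Real.rpow_pos_of_pos (IsPeriodicFun.integral_pos hL (fun x i => ?_)
      (huc.rpow_const fun x => Or.inl (hupos x).ne')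
      (fun x => (Real.rpow_pos_of_pos (hupos x) _).le) ?_) _
    · simp only [huper x i]
    · exact Function.ne_iff.2 ⟨0, (Real.rpow_pos_of_pos (hupos 0) _).ne'⟩
  obtain ⟨C, hC⟩ := exists_rayleigh_bound (k := k) (s := s) hL huc hupos huper h₁ h₂ p₁ p₂ hne
  have hle : ∀ z : ℂ, z ≠ 0 →
      perEnergy n k s L (lin v₁ v₂ z) / perWeight n k L u (lin v₁ v₂ z) * I ^ (2 / (k : ℝ))
        ≤ r := by
    intro z hz
    rw [hr]
    refine le_csSup ⟨C * I ^ (2 / (k : ℝ)), ?_⟩ ⟨lin v₁ v₂ z, ?_, hne z hz, rfl⟩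
    · rintro t ⟨v, hv, hv0, rfl⟩
      obtain ⟨w, rfl⟩ := hrep v hv
      refine mul_le_mul_of_nonneg_right (hC w ?_) hIpos.le
      rintro rfl
      exact hv0 (by funext x; simp [lin])
    · rw [hlin]; exact Subtype.coe_prop _
  have hW : ∀ z : ℂ, z ≠ 0 → 0 < perWeight n k L u (lin v₁ v₂ z) := fun z hz =>
    perWeight_pos hL huc hupos huper (lin_contDiff h₁ h₂ z).continuous (lin_periodic p₁ p₂ z)
      (hne z hz)
  have hr0 : 0 ≤ r := le_trans (mul_nonneg (div_nonneg (perEnergy_nonneg hk hs _)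
    (hW 1 one_ne_zero).le) hIpos.le) (hle 1 one_ne_zero)
  refine le_of_forall_gt_imp_ge_of_dense fun r' hr' => ?_
  have key := two_rpow_mul_yPer_le_of_pencil (ν := r' / I ^ (2 / (k : ℝ))) hk hs hL
    (div_nonneg (hr0.trans hr'.le) hIpos.le) huc hupos h₁ h₂ p₁ p₂ fun z hz => by
      rw [← div_lt_iff₀ (hW z hz), lt_div_iff₀ hIpos]
      exact (hle z hz).trans_lt hr'
  rwa [← hI, div_mul_cancel₀ _ hIpos.ne'] at key

end Sup

/-- For `m, n ≥ 1` with `k = m + n ≥ 3`, `s > 0` and `L > 0`,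
`2^{2/k} · Y_per(L) ≤ Y²_per(L)`. -/
theorem periodic_second_yamabe_lower_bound (m n : ℕ) (hm : 1 ≤ m) (hn : 1 ≤ n)
    (hk : 3 ≤ m + n) (s L : ℝ) (hs : 0 < s) (hL : 0 < L) :
    2 ^ ((2 : ℝ) / ((m + n : ℕ) : ℝ)) * yPer n (m + n) s L ≤ y2Per n (m + n) s L := by
  exact le_csInf (y2PerSet_nonempty hn hL) fun r hr => two_rpow_mul_yPer_le_of_mem hk hs hL hr
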